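/- arXiv:math/0603441 — 2 statements merged into one kernel-verified Lean document; each statement's English description precedes it below -/
import Mathlib

section
/- Let H be a complex Hilbert space, S ⊆ H a dense subspace, and P : S → H a linear map which is symmetric (⟪P x, y⟫ = ⟪x, P y⟫ for all x, y ∈ S) and satisfies ‖P x‖ ≥ ‖x‖ for all x ∈ S. If P is essentially self-adjoint, then its closure P̄ is a bijection from its domain onto H: for every α ∈ H there is a unique γ ∈ dom(P̄) with P̄ γ = α. -/
/-!
The bound `‖x‖ ≤ ‖P x‖` passes to the closed graph, which gives uniqueness, and makes preimages of
convergent sequences in the range Cauchy, so it suffices that the range of `P` is dense. A vector `x`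
orthogonal to the range lies in the domain of `P*` with `P* x = 0`; essential self-adjointness
places it in the domain of `P̄`, symmetry gives `P̄ x = 0`, and the bound forces `x = 0`.
-/

open scoped ComplexInnerProductSpace
open Filter

/-- `(x, y)` belongs to the graph of the closure `P̄` of `P` : there is a sequence
in `S` converging to `x` whose image under `P` converges to `y`. -/
def InClosureGraph {H : Type*} [NormedAddCommGroup H] [InnerProductSpace ℂ H]
    (S : Submodule ℂ H) (P : S →ₗ[ℂ] H) (x y : H) : Prop :=
  ∃ u : ℕ → S, Tendsto (fun n => (u n : H)) atTop (nhds x) ∧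
    Tendsto (fun n => P (u n)) atTop (nhds y)

/-- `x` belongs to the domain of the adjoint `P*` : the functional
`y ↦ ⟪x, P y⟫` is bounded on `S`. -/
def InAdjointDomain {H : Type*} [NormedAddCommGroup H] [InnerProductSpace ℂ H]
    (S : Submodule ℂ H) (P : S →ₗ[ℂ] H) (x : H) : Prop :=
  ∃ C : ℝ, ∀ y : S, ‖⟪x, P y⟫‖ ≤ C * ‖(y : H)‖

section

variable {H : Type*} [NormedAddCommGroup H] [InnerProductSpace ℂ H]
  {S : Submodule ℂ H} {P : S →ₗ[ℂ] H}

theorem InClosureGraph.sub {x y x' y' : H} (h : InClosureGraph S P x y)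
    (h' : InClosureGraph S P x' y') : InClosureGraph S P (x - x') (y - y') := by
  obtain ⟨u, hu, hPu⟩ := h
  obtain ⟨v, hv, hPv⟩ := h'
  exact ⟨fun n => u n - v n, by simpa using hu.sub hv, by simpa using hPu.sub hPv⟩

theorem InClosureGraph.norm_le (hbound : ∀ x : S, ‖(x : H)‖ ≤ ‖P x‖) {x y : H}
    (h : InClosureGraph S P x y) : ‖x‖ ≤ ‖y‖ := by
  obtain ⟨u, hu, hPu⟩ := h
  exact le_of_tendsto_of_tendsto' hu.norm hPu.norm fun n => hbound (u n)

theorem InClosureGraph.inner_eq (hsymm : ∀ x y : S, ⟪P x, (y : H)⟫ = ⟪(x : H), P y⟫) {x y : H}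
    (h : InClosureGraph S P x y) (z : S) : ⟪y, (z : H)⟫ = ⟪x, P z⟫ := by
  obtain ⟨u, hu, hPu⟩ := h
  have h1 : Tendsto (fun n => ⟪P (u n), (z : H)⟫) atTop (nhds ⟪y, (z : H)⟫) :=
    hPu.inner tendsto_const_nhds
  simp only [hsymm] at h1
  exact tendsto_nhds_unique h1 (hu.inner tendsto_const_nhds)

theorem dense_range_of_essentiallySelfAdjoint [CompleteSpace H] (hS : Dense (S : Set H))
    (hsymm : ∀ x y : S, ⟪P x, (y : H)⟫ = ⟪(x : H), P y⟫)
    (hbound : ∀ x : S, ‖(x : H)‖ ≤ ‖P x‖)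
    (hesa : ∀ x : H, InAdjointDomain S P x → ∃ y : H, InClosureGraph S P x y) :
    Dense (LinearMap.range P : Set H) := by
  rw [Submodule.dense_iff_topologicalClosure_eq_top, Submodule.topologicalClosure_eq_top_iff,
    Submodule.eq_bot_iff]
  intro x hx
  have hx0 : ∀ z : S, ⟪x, P z⟫ = 0 := fun z =>
    (Submodule.mem_orthogonal' _ x).1 hx _ (LinearMap.mem_range_self P z)
  obtain ⟨y, hy⟩ := hesa x ⟨0, fun z => by simp [hx0 z]⟩
  have hy0 : y = 0 := hS.eq_zero_of_inner_left ℂ fun z hz => by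
    simpa [hx0] using hy.inner_eq hsymm ⟨z, hz⟩
  simpa [hy0] using hy.norm_le hbound

end

/-- If `P` is a densely defined symmetric operator with `‖P x‖ ≥ ‖x‖` which is
essentially self-adjoint, then its closure `P̄` is a bijection from its domain
onto `H` : for every `α` there is a unique `γ` in the domain of `P̄` with
`P̄ γ = α`. -/
theorem closure_bijective_of_essentiallySelfAdjoint
    {H : Type*} [NormedAddCommGroup H] [InnerProductSpace ℂ H] [CompleteSpace H]
    (S : Submodule ℂ H) (hS : Dense (S : Set H)) (P : S →ₗ[ℂ] H)
    (hsymm : ∀ x y : S, ⟪P x, (y : H)⟫ = ⟪(x : H), P y⟫)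
    (hbound : ∀ x : S, ‖(x : H)‖ ≤ ‖P x‖)
    (hesa : ∀ x : H, InAdjointDomain S P x → ∃ y : H, InClosureGraph S P x y) :
    ∀ α : H, ∃! γ : H, InClosureGraph S P γ α := by
  intro α
  obtain ⟨w, hw, hwα⟩ := mem_closure_iff_seq_limit.1
    (dense_range_of_essentiallySelfAdjoint hS hsymm hbound hesa α)
  choose u hu using hw
  obtain rfl : (fun n => P (u n)) = w := funext hu
  have hcauchy : CauchySeq fun n => (u n : H) := by
    have hc := hwα.cauchySeq
    rw [Metric.cauchySeq_iff] at hc ⊢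
    intro ε hε
    obtain ⟨N, hN⟩ := hc ε hε
    refine ⟨N, fun m hm n hn => lt_of_le_of_lt ?_ (hN m hm n hn)⟩
    simpa [dist_eq_norm] using hbound (u m - u n)
  obtain ⟨γ, hγ⟩ := cauchySeq_tendsto_of_complete hcauchy
  have hγα : InClosureGraph S P γ α := ⟨u, hγ, hwα⟩
  refine ⟨γ, hγα, fun γ' hγ' => ?_⟩
  simpa [sub_eq_zero] using (hγ'.sub hγα).norm_le hbound
end

section
/- Let f : ℝ → ℝ be twice differentiable on [0, ∞) with f″(t) ≥ f(t) for all t ≥ 0, f(0) ≥ 0, and f′(0) ≥ 0. Then f(t) ≥ f(0)·cosh(t) for all t ≥ 0; in particular f(t) ≥ (f(0)/2)·eᵗ for all t ≥ 0. -/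
/-!
The operator `D² - 1` factors as `(D - 1)(D + 1)`, so the second-order inequality splits into two
first-order ones, each settled by an integrating factor. Since
`((f + f') e^{-t})' = (f'' - f) e^{-t} ≥ 0`, it follows that `f + f' ≥ (f 0 + f' 0) eᵗ ≥ f 0 eᵗ`; then
`(f eᵗ - (f 0 / 2) e^{2t})' = (f + f') eᵗ - f 0 e^{2t} ≥ 0`, and comparing with `t = 0` gives
`f eᵗ ≥ f 0 (e^{2t} + 1) / 2`, that is, `f ≥ f 0 cosh t`.
-/

lemma value_zero_le_of_deriv_nonneg {g g' : ℝ → ℝ}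
    (hg : ∀ t ∈ Set.Ici (0 : ℝ), HasDerivWithinAt g (g' t) (Set.Ici 0) t)
    (hpos : ∀ t ∈ Set.Ici (0 : ℝ), 0 ≤ g' t) {t : ℝ} (ht : t ∈ Set.Ici (0 : ℝ)) :
    g 0 ≤ g t := by
  have hmono : MonotoneOn g (Set.Ici 0) :=
    monotoneOn_of_hasDerivWithinAt_nonneg (convex_Ici 0)
      (fun x hx => (hg x hx).continuousWithinAt)
      (fun x hx => (hg x (interior_subset hx)).mono interior_subset)
      (fun x hx => hpos x (interior_subset hx))
  exact hmono Set.self_mem_Ici ht ht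

/-- Scalar comparison inequality for Jacobi-field growth : if `f″ ≥ f` on `[0, ∞)`
with `f(0) ≥ 0` and `f′(0) ≥ 0`, then `f(t) ≥ f(0) cosh t ≥ (f(0)/2) eᵗ` for `t ≥ 0`. -/
theorem jacobi_field_growth
    (f f' f'' : ℝ → ℝ)
    (hf : ∀ t ∈ Set.Ici (0 : ℝ), HasDerivWithinAt f (f' t) (Set.Ici 0) t)
    (hf' : ∀ t ∈ Set.Ici (0 : ℝ), HasDerivWithinAt f' (f'' t) (Set.Ici 0) t)
    (hcomp : ∀ t ∈ Set.Ici (0 : ℝ), f t ≤ f'' t)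
    (hf0 : 0 ≤ f 0) (hf'0 : 0 ≤ f' 0) :
    ∀ t ∈ Set.Ici (0 : ℝ), f 0 * Real.cosh t ≤ f t ∧ (f 0 / 2) * Real.exp t ≤ f t := by
  have hsum : ∀ t ∈ Set.Ici (0 : ℝ), f 0 * Real.exp t ≤ f t + f' t := by
    intro t ht
    have h := value_zero_le_of_deriv_nonneg
      (g := fun s => (f s + f' s) * Real.exp (-s))
      (g' := fun s => (f'' s - f s) * Real.exp (-s))
      (fun s hs => by
        have hexp : HasDerivWithinAt (fun s : ℝ => Real.exp (-s)) (Real.exp (-s) * -1)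
            (Set.Ici 0) s := ((hasDerivAt_neg s).exp).hasDerivWithinAt
        exact (((hf s hs).add (hf' s hs)).mul hexp).congr_deriv
          (by simp only [Pi.add_apply]; ring))
      (fun s hs => mul_nonneg (sub_nonneg.2 (hcomp s hs)) (Real.exp_pos _).le) ht
    have h0 : f 0 ≤ (f t + f' t) * Real.exp (-t) := by
      simp only [neg_zero, Real.exp_zero, mul_one] at h
      linarith
    rwa [Real.exp_neg, ← div_eq_mul_inv, le_div_iff₀ (Real.exp_pos t)] at h0
  intro t ht
  have h := value_zero_le_of_deriv_nonneg
    (g := fun s => f s * Real.exp s - f 0 / 2 * (Real.exp s * Real.exp s))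
    (g' := fun s => (f s + f' s - f 0 * Real.exp s) * Real.exp s)
    (fun s hs => by
      have hexp : HasDerivWithinAt Real.exp (Real.exp s) (Set.Ici 0) s :=
        (Real.hasDerivAt_exp s).hasDerivWithinAt
      exact (((hf s hs).mul hexp).sub ((hexp.mul hexp).const_mul (f 0 / 2))).congr_deriv
        (by ring))
    (fun s hs => mul_nonneg (sub_nonneg.2 (hsum s hs)) (Real.exp_pos _).le) ht
  simp only [Real.exp_zero, mul_one] at h
  have hcosh : f 0 * Real.cosh t ≤ f t := by
    have hinv : Real.exp (-t) * Real.exp t = 1 := by rw [← Real.exp_add]; simp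
    refine le_of_mul_le_mul_right ?_ (Real.exp_pos t)
    rw [Real.cosh_eq]
    linear_combination h + f 0 / 2 * hinv
  refine ⟨hcosh, le_trans ?_ hcosh⟩
  rw [Real.cosh_eq]
  linarith [mul_nonneg hf0 (Real.exp_pos (-t)).le]
end
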